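/- Let K be a commutative ring, A a finite alphabet, and S : A* → K a cyclic formal power series on the free monoid A*. Then for every n ≥ 1, the sum of S(w) over all words w of length n equals the sum, over all primitive words u of length dividing n, of S(u)^{n/|u|}. -/

import Mathlib

/-!
Every nonempty word `w` is `u ^ r` for exactly one primitive word `u` and one `r ≥ 1`. Hence the
words of length `n` are in bijection with the primitive words `u` whose length `m` divides `n`, via
`u ↦ u ^ (n / m)`, and the power rule for `S` matches the two sums term by term.

Existence of the root is strong induction on length (`exists_primitive_root`). For uniqueness, if
`u ^ r = v ^ s` then `u * v` and `v * u` are prefixes of the same length of `(u ^ r) ^ 2`, so `u` and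
`v` commute; commuting words are powers of a common word (`exists_common_root`), and primitivity
forces both exponents to be `1` (`primitive_root_unique`).
-/

open scoped Classical

/-- A word in the free monoid is primitive if it is nonempty and is not a proper power. -/
def IsPrimitiveWord {A : Type*} (w : FreeMonoid A) : Prop :=
  w ≠ 1 ∧ ∀ (u : FreeMonoid A) (r : ℕ), 2 ≤ r → w ≠ u ^ r

theorem FreeMonoid.length_pow' {A : Type*} (u : FreeMonoid A) (r : ℕ) :
    (u ^ r).length = r * u.length := by
  induction r with
  | zero => simp
  | succ k ih => rw [pow_succ, FreeMonoid.length_mul, ih]; ring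

/-- Words that are prefixes of a common word are comparable: the shorter divides the longer. -/
theorem FreeMonoid.prefix_of_mul_eq_mul {A : Type*} {x y c d : FreeMonoid A}
    (h : x * c = y * d) (hl : x.length ≤ y.length) : ∃ t, y = x * t := by
  have h1 : x.toList <+: (x * c).toList := ⟨c.toList, rfl⟩
  have h2 : y.toList <+: (x * c).toList := h ▸ ⟨d.toList, rfl⟩
  obtain ⟨t, ht⟩ := List.prefix_of_prefix_length_le h1 h2 hl
  exact ⟨FreeMonoid.ofList t, ht.symm⟩

theorem FreeMonoid.eq_of_mul_eq_mul {A : Type*} {x y c d : FreeMonoid A}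
    (h : x * c = y * d) (hl : x.length = y.length) : x = y := by
  obtain ⟨t, rfl⟩ := FreeMonoid.prefix_of_mul_eq_mul h hl.le
  rw [FreeMonoid.length_mul] at hl
  have : t = 1 := FreeMonoid.length_eq_zero.mp (by omega)
  simp [this]

/-- Commuting words are powers of a common word; the induction is the Euclidean algorithm on
their lengths. -/
theorem FreeMonoid.exists_common_root {A : Type*} (N : ℕ) : ∀ x y : FreeMonoid A,
    x.length + y.length ≤ N → x * y = y * x → ∃ (z : FreeMonoid A) (i j : ℕ),
      x = z ^ i ∧ y = z ^ j := by
  induction N with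
  | zero =>
    intro x y hl _
    exact ⟨1, 0, 0, by simpa using FreeMonoid.length_eq_zero.mp (by omega),
      by simpa using FreeMonoid.length_eq_zero.mp (by omega)⟩
  | succ N ih =>
    intro x y hl h
    wlog hxy : x.length ≤ y.length generalizing x y
    · obtain ⟨z, i, j, hi, hj⟩ := this y x (by omega) h.symm (by omega)
      exact ⟨z, j, i, hj, hi⟩
    by_cases hx : x = 1
    · exact ⟨y, 0, 1, by simpa using hx, by simp⟩
    have hx0 : x.length ≠ 0 := fun h0 => hx (FreeMonoid.length_eq_zero.mp h0)
    obtain ⟨t, rfl⟩ := FreeMonoid.prefix_of_mul_eq_mul h hxy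
    rw [FreeMonoid.length_mul] at hl
    rw [mul_assoc] at h
    obtain ⟨z, i, j, hi, hj⟩ := ih x t (by omega) (mul_left_cancel h)
    exact ⟨z, i, i + j, hi, by rw [pow_add, ← hi, ← hj]⟩

theorem IsPrimitiveWord.length_pos {A : Type*} {u : FreeMonoid A} (hu : IsPrimitiveWord u) :
    0 < u.length :=
  Nat.pos_of_ne_zero fun h => hu.1 (FreeMonoid.length_eq_zero.mp h)

theorem IsPrimitiveWord.eq_of_eq_pow {A : Type*} {u z : FreeMonoid A} (hu : IsPrimitiveWord u)
    {i : ℕ} (h : u = z ^ i) : u = z := by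
  obtain hi | rfl | rfl : 2 ≤ i ∨ i = 0 ∨ i = 1 := by omega
  · exact absurd h (hu.2 z i hi)
  · exact absurd (by simpa using h) hu.1
  · simpa using h

theorem primitive_root_unique {A : Type*} {u v : FreeMonoid A} (hu : IsPrimitiveWord u)
    (hv : IsPrimitiveWord v) {r s : ℕ} (hr : r ≠ 0) (hs : s ≠ 0) (h : u ^ r = v ^ s) :
    u = v := by
  obtain ⟨r, rfl⟩ := Nat.exists_eq_succ_of_ne_zero hr
  obtain ⟨s, rfl⟩ := Nat.exists_eq_succ_of_ne_zero hs
  -- Both sides equal `w * w`, where `w = u ^ (r + 1) = v ^ (s + 1)`.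
  have key : (u * v) * (v ^ s * u ^ r) = (v * u) * (u ^ r * v ^ s) := by
    have h1 : (u * v) * (v ^ s * u ^ r) = u ^ (r + 1) * u ^ (r + 1) := by
      calc (u * v) * (v ^ s * u ^ r) = u * v ^ (s + 1) * u ^ r := by
            rw [pow_succ' v s]; simp only [mul_assoc]
        _ = u * u ^ (r + 1) * u ^ r := by rw [← h]
        _ = _ := by rw [← pow_succ', ← pow_add, ← pow_add]; congr 1; omega
    have h2 : (v * u) * (u ^ r * v ^ s) = v ^ (s + 1) * v ^ (s + 1) := by
      calc (v * u) * (u ^ r * v ^ s) = v * u ^ (r + 1) * v ^ s := by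
            rw [pow_succ' u r]; simp only [mul_assoc]
        _ = v * v ^ (s + 1) * v ^ s := by rw [← h]
        _ = _ := by rw [← pow_succ', ← pow_add, ← pow_add]; congr 1; omega
    rw [h1, h2]
    exact congrArg₂ _ h h
  have hc : u * v = v * u := FreeMonoid.eq_of_mul_eq_mul key (by
    rw [FreeMonoid.length_mul, FreeMonoid.length_mul, add_comm])
  obtain ⟨z, i, j, hi, hj⟩ := FreeMonoid.exists_common_root _ u v le_rfl hc
  rw [hu.eq_of_eq_pow hi, hv.eq_of_eq_pow hj]

theorem exists_primitive_root {A : Type*} (N : ℕ) : ∀ w : FreeMonoid A, w.length ≤ N → w ≠ 1 →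
    ∃ (u : FreeMonoid A) (r : ℕ), IsPrimitiveWord u ∧ w = u ^ r := by
  induction N with
  | zero => exact fun w hl hw => absurd (FreeMonoid.length_eq_zero.mp (by omega)) hw
  | succ N ih =>
    intro w hl hw
    by_cases hp : IsPrimitiveWord w
    · exact ⟨w, 1, hp, by simp⟩
    obtain ⟨v, r, hr, rfl⟩ : ∃ v r, 2 ≤ r ∧ w = v ^ r := by
      simpa [IsPrimitiveWord, hw] using hp
    have hv : v ≠ 1 := by rintro rfl; simp at hw
    have hv0 : v.length ≠ 0 := fun h0 => hv (FreeMonoid.length_eq_zero.mp h0)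
    rw [FreeMonoid.length_pow'] at hl
    have := Nat.mul_le_mul_right v.length hr
    obtain ⟨u, s, hu, rfl⟩ := ih v (by omega) hv
    exact ⟨u, s * r, hu, by rw [pow_mul]⟩

theorem exists_ofFn_of_length {A : Type*} {n : ℕ} (w : FreeMonoid A) (h : w.length = n) :
    ∃ f : Fin n → A, FreeMonoid.ofList (List.ofFn f) = w := by
  subst h
  exact ⟨w.toList.get, List.ofFn_get _⟩

theorem length_ofFn_word {A : Type*} {n : ℕ} (f : Fin n → A) :
    (FreeMonoid.ofList (List.ofFn f)).length = n :=
  List.length_ofFn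

theorem cyclic_sum_primitive {K : Type*} [CommRing K] {A : Type*} [Fintype A]
    (S : FreeMonoid A → K)
    (hc1 : ∀ u v : FreeMonoid A, S (u * v) = S (v * u))
    (hc2 : ∀ w : FreeMonoid A, w ≠ 1 → ∀ r : ℕ, 2 ≤ r → S (w ^ r) = S w ^ r)
    (n : ℕ) (hn : 1 ≤ n) :
    ∑ w : Fin n → A, S (FreeMonoid.ofList (List.ofFn w)) =
      ∑ m ∈ n.divisors, ∑ u : Fin m → A,
        if IsPrimitiveWord (FreeMonoid.ofList (List.ofFn u))
        then S (FreeMonoid.ofList (List.ofFn u)) ^ (n / m) else 0 := by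
  have hq : ∀ m ∈ n.divisors, n / m ≠ 0 := fun m hm =>
    (Nat.div_pos (Nat.divisor_le hm) (Nat.pos_of_mem_divisors hm)).ne'
  simp_rw [← Finset.sum_filter]
  rw [Finset.sum_sigma']
  symm
  have hex : ∀ p : (Σ m : ℕ, Fin m → A), p.1 ∈ n.divisors → ∃ f : Fin n → A,
      FreeMonoid.ofList (List.ofFn f) = FreeMonoid.ofList (List.ofFn p.2) ^ (n / p.1) := by
    intro p hp
    apply exists_ofFn_of_length
    rw [FreeMonoid.length_pow', length_ofFn_word]
    exact Nat.div_mul_cancel (Nat.dvd_of_mem_divisors hp)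
  choose F hF using hex
  refine Finset.sum_bij (fun p hp => F p (Finset.mem_sigma.mp hp).1) ?_ ?_ ?_ ?_
  · intros; exact Finset.mem_univ _
  · rintro ⟨m, u⟩ hp ⟨m', u'⟩ hp' h
    have e := hF ⟨m, u⟩ (Finset.mem_sigma.mp hp).1
    have e' := hF ⟨m', u'⟩ (Finset.mem_sigma.mp hp').1
    have huu := e.symm.trans ((congrArg (fun f => FreeMonoid.ofList (List.ofFn f)) h).trans e')
    simp only [Finset.mem_sigma, Finset.mem_filter, Finset.mem_univ, true_and] at hp hp'
    have heq := primitive_root_unique hp.2 hp'.2 (hq m hp.1) (hq m' hp'.1) huu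
    have hm : m = m' := by
      rw [← length_ofFn_word u, heq, length_ofFn_word]
    subst hm
    rw [List.ofFn_injective (FreeMonoid.ofList.injective heq)]
  · intro w _
    have hw : FreeMonoid.ofList (List.ofFn w) ≠ 1 := by
      intro h
      have := length_ofFn_word w
      rw [h, FreeMonoid.length_one] at this
      omega
    obtain ⟨u, r, hu, hwu⟩ := exists_primitive_root _ _ le_rfl hw
    have hlen : n = r * u.length := by
      rw [← FreeMonoid.length_pow', ← hwu, length_ofFn_word]
    obtain ⟨f, hf⟩ := exists_ofFn_of_length u rfl
    have hd : u.length ∈ n.divisors :=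
      Nat.mem_divisors.mpr ⟨⟨r, by rw [mul_comm]; exact hlen⟩, by omega⟩
    refine ⟨⟨u.length, f⟩, ?_, ?_⟩
    · simp only [Finset.mem_sigma, Finset.mem_filter, Finset.mem_univ, true_and]
      exact ⟨hd, (congrArg IsPrimitiveWord hf).mpr hu⟩
    · apply List.ofFn_injective
      apply FreeMonoid.ofList.injective
      have hr : n / u.length = r := Nat.div_eq_of_eq_mul_left hu.length_pos hlen
      rw [hF ⟨u.length, f⟩ hd, hwu]
      simp only [hf, hr]
  · rintro ⟨m, u⟩ hp
    rw [hF]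
    simp only [Finset.mem_sigma, Finset.mem_filter, Finset.mem_univ, true_and] at hp
    have h0 : n / m ≠ 0 := hq m hp.1
    obtain h1 | h2 : n / m = 1 ∨ 2 ≤ n / m := by
      generalize n / m = q at h0 ⊢
      omega
    · simp [h1]
    · exact (hc2 _ hp.2.1 _ h2).symm
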